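/- arXiv:1908.02634 — 2 statements merged into one kernel-verified Lean document; each statement's English description precedes it below -/
import Mathlib

section
/- (Key identity of Proposition 4.) Let ψ: ℝ → ℂ be integrable and square-integrable, let κ > 0, and let h_κ(u) = 1/κ for |u| ≤ κ/2 and h_κ(u) = 0 otherwise. Define K(s,t) = ∫_ℝ h_κ(u) ψ(s−u) conj(ψ(t−u)) du and 𝒫(x) = ∫_ℝ ψ(t) conj(ψ(t−x)) dt. Then ∫_ℝ ∫_ℝ |K(s,t)|² ds dt = κ^{−2} ∫_{−κ/2}^{κ/2} ∫_{−κ/2}^{κ/2} |𝒫(v−u)|² du dv. -/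
open MeasureTheory Complex

theorem aux_meas (ψ : ℝ → ℂ) (hψ1 : AEStronglyMeasurable ψ volume)
    (f g : ℝ × ℝ → ℝ)
    (hf : Measure.QuasiMeasurePreserving f (volume.prod volume) volume)
    (hg : Measure.QuasiMeasurePreserving g (volume.prod volume) volume) :
    AEStronglyMeasurable (fun p : (ℝ × ℝ) × (ℝ × ℝ) => ψ (f p.1 - g p.2))
      ((volume.prod volume).prod (volume.prod volume)) := by
  have h1 : Measure.QuasiMeasurePreserving (Prod.map f g)
      ((volume.prod volume).prod (volume.prod volume)) ((volume : Measure ℝ).prod (volume : Measure ℝ)) :=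
    MeasureTheory.QuasiMeasurePreserving.prodMap hf hg
  have h2 : Measure.QuasiMeasurePreserving (fun p : ℝ × ℝ => p.1 - p.2)
      ((volume : Measure ℝ).prod (volume : Measure ℝ)) volume :=
    quasiMeasurePreserving_sub_of_right_invariant volume volume
  exact hψ1.comp_quasiMeasurePreserving (h2.comp h1)

theorem aux_int (ψ : ℝ → ℂ) (hψ1 : Integrable ψ) (hψ2 : Integrable (fun t => ‖ψ t‖ ^ 2))
    (u v : ℝ) : Integrable (fun s => ψ (s - u) * starRingEnd ℂ (ψ (s - v))) ∧
      ∫ s, ‖ψ (s - u) * starRingEnd ℂ (ψ (s - v))‖ ≤ ∫ s, ‖ψ s‖ ^ 2 := by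
  have hb : Integrable (fun s => (‖ψ (s - u)‖ ^ 2 + ‖ψ (s - v)‖ ^ 2) / 2) :=
    ((hψ2.comp_sub_right u).add (hψ2.comp_sub_right v)).div_const 2
  have hle : ∀ s, ‖ψ (s - u) * starRingEnd ℂ (ψ (s - v))‖ ≤
      (‖ψ (s - u)‖ ^ 2 + ‖ψ (s - v)‖ ^ 2) / 2 := by
    intro s
    rw [norm_mul, RCLike.norm_conj]
    nlinarith [sq_nonneg (‖ψ (s - u)‖ - ‖ψ (s - v)‖)]
  have hI : Integrable (fun s => ψ (s - u) * starRingEnd ℂ (ψ (s - v))) := by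
    refine hb.mono' ?_ (Filter.Eventually.of_forall hle)
    exact (hψ1.comp_sub_right u).1.mul
      (Complex.continuous_conj.comp_aestronglyMeasurable (hψ1.comp_sub_right v).1)
  refine ⟨hI, (integral_mono hI.norm hb hle).trans ?_⟩
  rw [integral_div, integral_add (hψ2.comp_sub_right u) (hψ2.comp_sub_right v),
    integral_sub_right_eq_self (fun s => ‖ψ s‖ ^ 2) u,
    integral_sub_right_eq_self (fun s => ‖ψ s‖ ^ 2) v]
  linarith

theorem aux_F (ψ : ℝ → ℂ) (hψ1 : Integrable ψ) (hψ2 : Integrable (fun t => ‖ψ t‖ ^ 2))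
    (h : ℝ → ℝ) (hh : Integrable h) :
    Integrable (fun p : (ℝ × ℝ) × (ℝ × ℝ) =>
      ((h p.2.2 : ℂ) * ψ (p.1.1 - p.2.2) * starRingEnd ℂ (ψ (p.1.2 - p.2.2))) *
      starRingEnd ℂ ((h p.2.1 : ℂ) * ψ (p.1.1 - p.2.1) * starRingEnd ℂ (ψ (p.1.2 - p.2.1))))
      ((volume.prod volume).prod (volume.prod volume)) := by
  have q1 : Measure.QuasiMeasurePreserving (Prod.fst : ℝ × ℝ → ℝ) (volume.prod volume) volume :=
    Measure.quasiMeasurePreserving_fst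
  have q2 : Measure.QuasiMeasurePreserving (Prod.snd : ℝ × ℝ → ℝ) (volume.prod volume) volume :=
    Measure.quasiMeasurePreserving_snd
  have q3 : Measure.QuasiMeasurePreserving (Prod.snd : (ℝ × ℝ) × (ℝ × ℝ) → ℝ × ℝ)
      ((volume.prod volume).prod (volume.prod volume)) (volume.prod volume) :=
    Measure.quasiMeasurePreserving_snd
  have hc : AEStronglyMeasurable (fun u => (h u : ℂ)) volume := hh.ofReal.1
  have cj : ∀ {f : (ℝ × ℝ) × (ℝ × ℝ) → ℂ},
      AEStronglyMeasurable f ((volume.prod volume).prod (volume.prod volume)) →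
      AEStronglyMeasurable (fun p => starRingEnd ℂ (f p))
        ((volume.prod volume).prod (volume.prod volume)) :=
    fun hf => Complex.continuous_conj.comp_aestronglyMeasurable hf
  have hm : AEStronglyMeasurable (fun p : (ℝ × ℝ) × (ℝ × ℝ) =>
      ((h p.2.2 : ℂ) * ψ (p.1.1 - p.2.2) * starRingEnd ℂ (ψ (p.1.2 - p.2.2))) *
      starRingEnd ℂ ((h p.2.1 : ℂ) * ψ (p.1.1 - p.2.1) * starRingEnd ℂ (ψ (p.1.2 - p.2.1))))
      ((volume.prod volume).prod (volume.prod volume)) := by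
    have a1 := hc.comp_quasiMeasurePreserving (q1.comp q3)
    have a2 := hc.comp_quasiMeasurePreserving (q2.comp q3)
    exact ((a2.mul (aux_meas ψ hψ1.1 _ _ q1 q2)).mul (cj (aux_meas ψ hψ1.1 _ _ q2 q2))).mul
      (cj ((a1.mul (aux_meas ψ hψ1.1 _ _ q1 q1)).mul (cj (aux_meas ψ hψ1.1 _ _ q2 q1))))
  have key : ∀ (y x : ℝ × ℝ), 
      ((h y.2 : ℂ) * ψ (x.1 - y.2) * starRingEnd ℂ (ψ (x.2 - y.2))) *
      starRingEnd ℂ ((h y.1 : ℂ) * ψ (x.1 - y.1) * starRingEnd ℂ (ψ (x.2 - y.1))) =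
      ((h y.1 : ℂ) * h y.2) * ((ψ (x.1 - y.2) * starRingEnd ℂ (ψ (x.1 - y.1))) *
        (ψ (x.2 - y.1) * starRingEnd ℂ (ψ (x.2 - y.2)))) := by
    intro y x
    simp only [map_mul, Complex.conj_ofReal, Complex.conj_conj]
    ring
  rw [integrable_prod_iff' hm]
  constructor
  · refine Filter.Eventually.of_forall fun y => ?_
    simp only [key]
    exact ((aux_int ψ hψ1 hψ2 y.2 y.1).1.mul_prod (aux_int ψ hψ1 hψ2 y.1 y.2).1).const_mul _
  · have hb : Integrable (fun y : ℝ × ℝ => (‖h y.1‖ * ‖h y.2‖) * (∫ s, ‖ψ s‖ ^ 2) ^ 2)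
        (volume.prod volume) := (hh.norm.mul_prod hh.norm).mul_const _
    refine hb.mono' ?_ (Filter.Eventually.of_forall fun y => ?_)
    · exact hm.norm.prod_swap.integral_prod_right'
    · simp only [key]
      rw [Real.norm_of_nonneg (integral_nonneg fun _ => norm_nonneg _)]
      have e : ∀ x : ℝ × ℝ, ‖((h y.1 : ℂ) * h y.2) * ((ψ (x.1 - y.2) * starRingEnd ℂ (ψ (x.1 - y.1))) *
        (ψ (x.2 - y.1) * starRingEnd ℂ (ψ (x.2 - y.2))))‖ = (‖h y.1‖ * ‖h y.2‖) *
        (‖ψ (x.1 - y.2) * starRingEnd ℂ (ψ (x.1 - y.1))‖ *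
        ‖ψ (x.2 - y.1) * starRingEnd ℂ (ψ (x.2 - y.2))‖) := by
        intro x
        rw [norm_mul, norm_mul, norm_mul (ψ (x.1 - y.2) * _), Complex.norm_real, Complex.norm_real]
      simp only [e]
      rw [integral_const_mul, integral_prod_mul
        (fun s => ‖ψ (s - y.2) * starRingEnd ℂ (ψ (s - y.1))‖)
        (fun s => ‖ψ (s - y.1) * starRingEnd ℂ (ψ (s - y.2))‖), sq]
      refine mul_le_mul_of_nonneg_left ?_ (by positivity)
      exact mul_le_mul (aux_int ψ hψ1 hψ2 _ _).2 (aux_int ψ hψ1 hψ2 _ _).2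
        (integral_nonneg fun _ => norm_nonneg _) (integral_nonneg fun _ => by positivity)

theorem stmt_10 (ψ : ℝ → ℂ) (κ : ℝ) (hκ : 0 < κ)
    (hψ1 : Integrable ψ) (hψ2 : Integrable (fun t => ‖ψ t‖ ^ 2))
    (hκfun : ℝ → ℝ) (hhκ : ∀ u, hκfun u = if |u| ≤ κ / 2 then κ⁻¹ else 0)
    (K : ℝ → ℝ → ℂ)
    (hK : ∀ s t, K s t = ∫ u, (hκfun u : ℂ) * ψ (s - u) * starRingEnd ℂ (ψ (t - u)))
    (P : ℝ → ℂ)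
    (hP : ∀ x, P x = ∫ t, ψ t * starRingEnd ℂ (ψ (t - x))) :
    ∫ s, ∫ t, ‖K s t‖ ^ 2 =
      (κ ^ 2)⁻¹ * ∫ v in (-(κ / 2))..(κ / 2), ∫ u in (-(κ / 2))..(κ / 2), ‖P (v - u)‖ ^ 2 := by
  have hind : hκfun = (Set.Icc (-(κ / 2)) (κ / 2)).indicator (fun _ => κ⁻¹) := by
    funext u
    rw [hhκ, Set.indicator_apply]
    simp only [Set.mem_Icc, abs_le]
  have hh : Integrable hκfun := by
    rw [hind, integrable_indicator_iff measurableSet_Icc]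
    exact integrableOn_const (by simp)
  have hmul : ∀ f : ℝ → ℝ, ∫ u, hκfun u * f u = κ⁻¹ * ∫ u in (-(κ / 2))..(κ / 2), f u := by
    intro f
    rw [intervalIntegral.integral_of_le (by linarith), ← integral_Icc_eq_integral_Ioc,
      ← integral_const_mul, ← integral_indicator measurableSet_Icc]
    congr 1
    funext u
    rw [hind]
    by_cases hu : u ∈ Set.Icc (-(κ / 2)) (κ / 2) <;> simp [hu]
  have hF := aux_F ψ hψ1 hψ2 hκfun hh
  -- inner integral in (v, u)
  have e1 : ∀ x : ℝ × ℝ, (∫ y : ℝ × ℝ,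
      ((hκfun y.2 : ℂ) * ψ (x.1 - y.2) * starRingEnd ℂ (ψ (x.2 - y.2))) *
      starRingEnd ℂ ((hκfun y.1 : ℂ) * ψ (x.1 - y.1) * starRingEnd ℂ (ψ (x.2 - y.1)))
      ∂(volume.prod volume)) = ((‖K x.1 x.2‖ ^ 2 : ℝ) : ℂ) := by
    intro x
    have := integral_prod_mul (μ := (volume : Measure ℝ)) (ν := (volume : Measure ℝ))
      (fun v => starRingEnd ℂ ((hκfun v : ℂ) * ψ (x.1 - v) * starRingEnd ℂ (ψ (x.2 - v))))
      (fun u => (hκfun u : ℂ) * ψ (x.1 - u) * starRingEnd ℂ (ψ (x.2 - u)))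
    rw [integral_conj, ← hK] at this
    rw [Complex.ofReal_pow, ← Complex.conj_mul', ← this]
    exact integral_congr_ae (Filter.Eventually.of_forall fun y => mul_comm _ _)
  have eP : ∀ u v : ℝ, ∫ s, ψ (s - u) * starRingEnd ℂ (ψ (s - v)) = P (v - u) := by
    intro u v
    rw [hP, ← integral_sub_right_eq_self (fun t => ψ t * starRingEnd ℂ (ψ (t - (v - u)))) u]
    congr 1
    funext s
    congr 3
    ring
  have e2 : ∀ y : ℝ × ℝ, (∫ x : ℝ × ℝ,
      ((hκfun y.2 : ℂ) * ψ (x.1 - y.2) * starRingEnd ℂ (ψ (x.2 - y.2))) *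
      starRingEnd ℂ ((hκfun y.1 : ℂ) * ψ (x.1 - y.1) * starRingEnd ℂ (ψ (x.2 - y.1)))
      ∂(volume.prod volume)) =
        ((hκfun y.1 * (hκfun y.2 * ‖P (y.1 - y.2)‖ ^ 2) : ℝ) : ℂ) := by
    intro y
    have h2 : ∫ s, starRingEnd ℂ (ψ (s - y.2) * starRingEnd ℂ (ψ (s - y.1))) =
        starRingEnd ℂ (P (y.1 - y.2)) := by
      rw [integral_conj, eP]
    have := integral_prod_mul (μ := (volume : Measure ℝ)) (ν := (volume : Measure ℝ))
      (fun s => ψ (s - y.2) * starRingEnd ℂ (ψ (s - y.1)))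
      (fun s => starRingEnd ℂ (ψ (s - y.2) * starRingEnd ℂ (ψ (s - y.1))))
    rw [h2, eP, Complex.mul_conj'] at this
    push_cast
    rw [← this, ← integral_const_mul, ← integral_const_mul]
    congr 1
    funext x
    simp only [map_mul, Complex.conj_ofReal, Complex.conj_conj]
    ring
  have i1 : Integrable (fun x : ℝ × ℝ => ‖K x.1 x.2‖ ^ 2) (volume.prod volume) := by
    have := hF.integral_prod_left
    simp only [e1] at this
    exact_mod_cast this.re
  have i2 : Integrable (fun y : ℝ × ℝ => hκfun y.1 * (hκfun y.2 * ‖P (y.1 - y.2)‖ ^ 2))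
      (volume.prod volume) := by
    have := hF.integral_prod_right
    simp only [e2] at this
    exact_mod_cast this.re
  have sw := integral_integral_swap (f := fun x y : ℝ × ℝ =>
      ((hκfun y.2 : ℂ) * ψ (x.1 - y.2) * starRingEnd ℂ (ψ (x.2 - y.2))) *
      starRingEnd ℂ ((hκfun y.1 : ℂ) * ψ (x.1 - y.1) * starRingEnd ℂ (ψ (x.2 - y.1)))) hF
  simp only [e1, e2] at sw
  rw [integral_complex_ofReal, integral_complex_ofReal, Complex.ofReal_inj,
    integral_prod _ i1, integral_prod _ i2] at sw
  rw [sw]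
  simp only [integral_const_mul, hmul]
  rw [intervalIntegral.integral_const_mul, ← mul_assoc]
  congr 1
  field_simp
end

section
/- Let ψ: ℝ → ℂ be integrable and square-integrable, with Fourier transform Ψ(f) = ∫_ℝ ψ(t) e^{−i2πft} dt satisfying Ψ(f) = 0 for almost every f ≤ 0 (i.e. ψ is an analytic wavelet). Then for every x ∈ ℝ, ∫_ℝ ψ(t) ψ(t−x) dt = 0; in particular ψ is orthogonal to its complex conjugate. -/
open MeasureTheory Complex

/-- The Fourier kernel `e^{-i 2 π x}`. -/
noncomputable def fker (x : ℝ) : ℂ := Complex.exp (-2 * Real.pi * x * Complex.I)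

open scoped FourierTransform

theorem fourier_aux (ψ : ℝ → ℂ) (f : ℝ) : 𝓕 ψ f = ∫ t, ψ t * fker (f * t) := by
  rw [Real.fourier_real_eq_integral_exp_smul]
  congr 1
  ext t
  rw [smul_eq_mul, mul_comm, fker]
  congr 2
  push_cast
  ring

theorem continuous_aux (ψ : ℝ → ℂ) (h : MemLp ψ 2) :
    Continuous (fun x : ℝ => ∫ t, ψ t * ψ (t - x)) := by
  haveI : Fact ((2 : ENNReal) ≠ ⊤) := ⟨by simp⟩
  have hs : MemLp (fun t => star (ψ t)) 2 := h.star
  have hc : Continuous (fun x : ℝ =>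
      inner ℂ (hs.toLp _) ((DomAddAct.mk (-x)) +ᵥ (h.toLp ψ) : Lp ℂ 2 (volume : Measure ℝ))) := by
    refine Continuous.inner continuous_const ?_
    have h1 : Continuous (fun x : ℝ => DomAddAct.mk (-x)) :=
      DomAddAct.continuous_mk.comp continuous_neg
    exact h1.vadd continuous_const
  convert hc using 2 with x
  rw [DomAddAct.mk_vadd_toLp, L2.inner_def]
  apply integral_congr_ae
  filter_upwards [hs.coeFn_toLp, (h.comp_measurePreserving
    (measurePreserving_vadd (-x) (volume : Measure ℝ))).coeFn_toLp] with t h1 h2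
  simp only [Function.comp_def] at h2
  erw [h1, h2]
  simp [mul_comm, sub_eq_add_neg, add_comm]

theorem stmt_12 (ψ : ℝ → ℂ)
    (hψ1 : Integrable ψ) (hψ2 : Integrable (fun t => ‖ψ t‖ ^ 2))
    (Ψ : ℝ → ℂ) (hΨ : ∀ f, Ψ f = ∫ t, ψ t * fker (f * t))
    (hanal : ∀ᵐ f : ℝ, f ≤ 0 → Ψ f = 0) :
    ∀ x : ℝ, ∫ t, ψ t * ψ (t - x) = 0 := by
  have hF : ∀ f, 𝓕 ψ f = Ψ f := fun f => by rw [hΨ, fourier_aux]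
  have hL2 : MemLp ψ 2 := (memLp_two_iff_integrable_sq_norm hψ1.1).2 hψ2
  have hneg : Integrable (fun t => ψ (-t)) := hψ1.comp_neg
  have hFn : ∀ f, 𝓕 (fun t => ψ (-t)) f = Ψ (-f) := fun f => by
    rw [← Real.fourierInv_eq_fourier_comp_neg, Real.fourierInv_eq_fourier_neg, hF]
  have hconv : (convolution ψ (fun t => ψ (-t)) (ContinuousLinearMap.mul ℂ ℂ) volume)
      = fun x : ℝ => ∫ t, ψ t * ψ (t - x) := by
    ext x
    simp [convolution_def]
  have hint := hψ1.integrable_convolution (ContinuousLinearMap.mul ℂ ℂ) hneg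
  have hft := Real.fourier_mul_convolution_eq hψ1 hneg
  rw [hconv] at hint hft
  have hanal2 : ∀ᵐ f : ℝ, -f ≤ 0 → Ψ (-f) = 0 :=
    (Measure.measurePreserving_neg (volume : Measure ℝ)).quasiMeasurePreserving.ae hanal
  have h0 : 𝓕 (fun x : ℝ => ∫ t, ψ t * ψ (t - x)) =ᵐ[volume] 0 := by
    filter_upwards [hanal, hanal2] with f h1 h2
    rw [hft, hF, hFn]
    rcases le_total f 0 with h | h
    · simp [h1 h]
    · simp [h2 (by linarith)]
  have hi : Integrable (𝓕 (fun x : ℝ => ∫ t, ψ t * ψ (t - x))) :=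
    (integrable_zero ℝ ℂ volume).congr h0.symm
  intro x
  have := (continuous_aux ψ hL2).fourierInv_fourier_eq hint hi
  rw [← congrFun this x, Real.fourierInv_eq]
  apply integral_eq_zero_of_ae
  filter_upwards [h0] with f hf
  rw [hf]; simp
end
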